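/- Let E be a real Hilbert space and q > 1. With F : E → E defined by F(x) = ‖x‖^(q−1) • x for x ≠ 0 and F(0) = 0, and A_λ : E → E defined by A_λ h = ‖λ‖^(q−1) • h + (q−1)·‖λ‖^(q−3)·⟪λ, h⟫ • λ for λ ≠ 0 and A_0 = 0, for all a, b ∈ E one has F(a) − F(b) = ∫₀¹ A_{b+σ(a−b)} (a − b) dσ, where the integral is a Bochner integral over σ ∈ [0,1]. -/

import Mathlib

open scoped Classical

/-- Mean-value integral representation for the damping nonlinearity
`F(x) = ‖x‖^(q−1) • x` on a real Hilbert space, `q > 1`: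
`F(a) − F(b) = ∫₀¹ A_{b+σ(a−b)} (a−b) dσ`, where `A_λ` is the Fréchet
derivative of `F` at `λ`. -/
theorem sub_eq_integral_fderiv_segment
    {E : Type*} [NormedAddCommGroup E] [InnerProductSpace ℝ E] [CompleteSpace E]
    (q : ℝ) (hq : 1 < q)
    (F : E → E)
    (hF : ∀ x : E, F x = if x = 0 then 0 else ‖x‖ ^ (q - 1) • x)
    (A : E → (E →L[ℝ] E))
    (hA : ∀ lam : E, A lam = if lam = 0 then 0 else
      ‖lam‖ ^ (q - 1) • ContinuousLinearMap.id ℝ E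
        + ((q - 1) * ‖lam‖ ^ (q - 3)) • (innerSL ℝ lam).smulRight lam) :
    ∀ a b : E, F a - F b = ∫ σ in (0:ℝ)..1, (A (b + σ • (a - b))) (a - b) := by
  have hq0 : 0 < q - 1 := by linarith
  have hpow0 : Filter.Tendsto (fun x : E => ‖x‖ ^ (q - 1)) (nhds 0) (nhds 0) := by
    have h : Continuous (fun x : E => ‖x‖ ^ (q - 1)) :=
      continuous_norm.rpow_const (fun _ => Or.inr hq0.le)
    have h2 := h.tendsto 0
    simpa [Real.zero_rpow hq0.ne'] using h2
  have hF' : ∀ x : E, F x = ‖x‖ ^ (q - 1) • x := by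
    intro x
    rw [hF]
    split_ifs with h
    · simp [h]
    · rfl
  have hd : ∀ x : E, HasFDerivAt F (A x) x := by
    intro x
    by_cases hx : x = 0
    · subst hx
      rw [hA, if_pos rfl, hasFDerivAt_iff_isLittleO_nhds_zero]
      have h1 : (fun x : E => ‖x‖ ^ (q - 1)) =o[nhds 0] (fun _ : E => (1 : ℝ)) :=
        (Asymptotics.isLittleO_one_iff ℝ).2 hpow0
      have h2 := h1.smul_isBigO (Asymptotics.isBigO_refl (fun x : E => x) (nhds 0))
      simpa [hF'] using h2
    · have hn : 0 < ‖x‖ := norm_pos_iff.2 hx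
      have h1 := ((hasStrictFDerivAt_norm_sq x).hasFDerivAt).rpow_const
        (p := (q - 1) / 2) (Or.inl (by positivity))
      have h2 := h1.smul (hasFDerivAt_id x)
      have e1 : ∀ y : E, (‖y‖ ^ 2) ^ ((q - 1) / 2) = ‖y‖ ^ (q - 1) := by
        intro y
        rw [← Real.rpow_natCast, ← Real.rpow_mul (norm_nonneg y)]
        congr 1
        push_cast
        ring
      have e2 : (‖x‖ ^ 2) ^ ((q - 1) / 2 - 1) = ‖x‖ ^ (q - 3) := by
        rw [← Real.rpow_natCast, ← Real.rpow_mul (norm_nonneg x)]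
        congr 1
        push_cast
        ring
      have hfun : F = fun y : E => (‖y‖ ^ 2) ^ ((q - 1) / 2) • id y := by
        funext y
        rw [hF', e1, id]
      rw [hfun]
      refine h2.congr_fderiv ?_
      rw [hA, if_neg hx, e1, e2]
      ext h
      simp [smul_smul]
      congr 1
      ring
  have hc : ∀ h : E, Continuous (fun x => A x h) := by
    intro h
    rw [continuous_iff_continuousAt]
    intro x
    by_cases hx : x = 0
    · subst hx
      have h0 : A 0 h = 0 := by rw [hA, if_pos rfl]; rfl
      change Filter.Tendsto (fun x => A x h) (nhds 0) (nhds (A 0 h))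
      rw [h0]
      refine squeeze_zero_norm (a := fun x : E => ‖x‖ ^ (q - 1) * (q * ‖h‖)) ?_ ?_
      · intro y
        rw [hA]
        split_ifs with hy
        · simp only [zero_apply, norm_zero]
          positivity
        · have hn : 0 < ‖y‖ := norm_pos_iff.2 hy
          have e3 : ‖y‖ ^ (q - 1) = ‖y‖ ^ (q - 3) * (‖y‖ * ‖y‖) := by
            rw [← sq, ← Real.rpow_natCast, ← Real.rpow_add hn]
            congr 1
            push_cast
            ring
          have hp : 0 ≤ ‖y‖ ^ (q - 3) := by positivity
          have hi : ‖inner ℝ y h‖ ≤ ‖y‖ * ‖h‖ := norm_inner_le_norm y h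
          calc _ = ‖‖y‖ ^ (q - 1) • h + ((q - 1) * ‖y‖ ^ (q - 3)) • (inner ℝ y h • y)‖ := by simp
            _ ≤ ‖‖y‖ ^ (q - 1) • h‖ + ‖((q - 1) * ‖y‖ ^ (q - 3)) • (inner ℝ y h • y)‖ :=
              norm_add_le _ _
            _ = ‖y‖ ^ (q - 1) * ‖h‖ + ((q - 1) * ‖y‖ ^ (q - 3)) * (‖inner ℝ y h‖ * ‖y‖) := by
              rw [norm_smul, norm_smul, norm_smul, Real.norm_of_nonneg (by positivity),
                Real.norm_of_nonneg (by positivity)]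
            _ ≤ ‖y‖ ^ (q - 1) * ‖h‖ + ((q - 1) * ‖y‖ ^ (q - 3)) * ((‖y‖ * ‖h‖) * ‖y‖) := by
              gcongr
            _ = _ := by rw [e3]; ring
      · simpa using hpow0.mul_const (q * ‖h‖)
    · have hn : ‖x‖ ≠ 0 := norm_ne_zero_iff.2 hx
      have hg : ContinuousAt (fun y : E => ‖y‖ ^ (q - 1) • h
          + ((q - 1) * ‖y‖ ^ (q - 3)) • (inner ℝ y h • y)) x := by
        have c1 : ContinuousAt (fun y : E => ‖y‖ ^ (q - 1)) x :=
          continuous_norm.continuousAt.rpow_const (Or.inl hn)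
        have c2 : ContinuousAt (fun y : E => ‖y‖ ^ (q - 3)) x :=
          continuous_norm.continuousAt.rpow_const (Or.inl hn)
        have c3 : ContinuousAt (fun y : E => inner ℝ y h • y) x := by fun_prop
        exact (c1.smul continuousAt_const).add ((continuousAt_const.mul c2).smul c3)
      refine hg.congr ?_
      filter_upwards [isOpen_ne.mem_nhds hx] with y hy
      rw [hA, if_neg hy]
      simp
  intro a b
  have hder : ∀ σ ∈ Set.uIcc (0 : ℝ) 1, HasDerivAt (fun σ : ℝ => F (b + σ • (a - b)))
      ((A (b + σ • (a - b))) (a - b)) σ := by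
    intro σ _
    have hl : HasDerivAt (fun σ : ℝ => b + σ • (a - b)) (a - b) σ := by
      simpa using ((hasDerivAt_id σ).smul_const (a - b)).const_add b
    exact (hd _).comp_hasDerivAt σ hl
  have hcont : Continuous (fun σ : ℝ => (A (b + σ • (a - b))) (a - b)) :=
    (hc (a - b)).comp (by fun_prop)
  rw [intervalIntegral.integral_eq_sub_of_hasDerivAt hder (hcont.intervalIntegrable 0 1)]
  simp
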